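/- If a(0) = (a_1(0), a_2(0), …) ∈ ℓ², then the solution a(t) of the shell model given by the generating function representation satisfies ‖a(t)‖_{ℓ²} = ‖a(0)‖_{ℓ²} for all t ≥ 0; i.e., energy is exactly conserved for finite-energy initial data. -/

import Mathlib

open scoped InnerProductSpace

/-- A Gram-matrix preserving change of a total family induces a contraction. -/
lemma gram_contraction {H ι : Type*} [NormedAddCommGroup H] [InnerProductSpace ℝ H]
    [CompleteSpace H] (k k' : ι → H)
    (htot : ∀ x : H, (∀ i, ⟪x, k i⟫_ℝ = 0) → x = 0)
    (hgram : ∀ i j, ⟪k' i, k' j⟫_ℝ = ⟪k i, k j⟫_ℝ) (f : H) :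
    ∃ g : H, ‖g‖ ≤ ‖f‖ ∧ ∀ i, ⟪g, k i⟫_ℝ = ⟪f, k' i⟫_ℝ := by
  set L := Finsupp.linearCombination ℝ k with hL
  set L' := Finsupp.linearCombination ℝ k' with hL'
  have hin : ∀ c d, ⟪L' c, L' d⟫_ℝ = ⟪L c, L d⟫_ℝ := by
    intro c d
    simp only [hL, hL', Finsupp.linearCombination_apply, Finsupp.sum, sum_inner, inner_sum,
      inner_smul_left, inner_smul_right, hgram]
  have hnorm : ∀ c, ‖L' c‖ ≤ 1 * ‖L c‖ := by
    intro c
    rw [one_mul, @norm_eq_sqrt_real_inner, @norm_eq_sqrt_real_inner, hin]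
  have hd : DenseRange L := by
    have h1 : (LinearMap.range L).topologicalClosure = ⊤ := by
      rw [Submodule.topologicalClosure_eq_top_iff, Submodule.eq_bot_iff]
      intro x hx
      apply htot
      intro i
      rw [Submodule.mem_orthogonal'] at hx
      exact hx _ ⟨Finsupp.single i 1, by simp [hL]⟩
    have h2 := Submodule.dense_iff_topologicalClosure_eq_top.2 h1
    rwa [LinearMap.coe_range] at h2
  set V := L'.extendOfNorm L with hV
  have hVn : ‖V‖ ≤ 1 := LinearMap.opNorm_extendOfNorm_le hd zero_le_one hnorm
  refine ⟨ContinuousLinearMap.adjoint V f, ?_, ?_⟩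
  · calc _ ≤ ‖ContinuousLinearMap.adjoint V‖ * ‖f‖ := ContinuousLinearMap.le_opNorm _ _
      _ ≤ 1 * ‖f‖ := by
        gcongr
        simpa using hVn
      _ = ‖f‖ := one_mul _
  · intro i
    rw [ContinuousLinearMap.adjoint_inner_left]
    have := LinearMap.extendOfNorm_eq hd ⟨1, hnorm⟩ (Finsupp.single i 1)
    simp only [hL, hL', Finsupp.linearCombination_single, one_smul] at this
    rw [← this]

/-- A real power series on `(-1,1)` determines its coefficients. -/
lemma coeff_unique (x y : ℕ → ℝ) (F : ℝ → ℝ)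
    (hx : ∀ w ∈ Set.Ioo (-1 : ℝ) 1, HasSum (fun n => x n * w ^ n) (F w))
    (hy : ∀ w ∈ Set.Ioo (-1 : ℝ) 1, HasSum (fun n => y n * w ^ n) (F w)) : x = y := by
  have key : ∀ x : ℕ → ℝ, (∀ w ∈ Set.Ioo (-1 : ℝ) 1, HasSum (fun n => x n * w ^ n) (F w)) →
      HasFPowerSeriesAt F (FormalMultilinearSeries.ofScalars ℝ x) 0 := by
    intro x hx
    refine ⟨((1 / 2 : NNReal) : ENNReal), ?_, by norm_num, ?_⟩
    · apply FormalMultilinearSeries.le_radius_of_tendsto (l := 0)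
      have h := (hx (1 / 2) (by norm_num)).summable.tendsto_atTop_zero.norm
      simpa [FormalMultilinearSeries.ofScalars_norm] using h
    · intro w hw
      have hw' : |w| < 1 / 2 := by
        rw [Metric.mem_eball, edist_nndist, ENNReal.coe_lt_coe, ← NNReal.coe_lt_coe] at hw
        simpa using hw
      rw [abs_lt] at hw'
      have := hx w ⟨by linarith [hw'.1], by linarith [hw'.2]⟩
      simpa [FormalMultilinearSeries.ofScalars_apply_eq, mul_comm] using this
  exact FormalMultilinearSeries.ofScalars_series_injective (𝕜 := ℝ) (E := ℝ)
    ((key x hx).eq_formalMultilinearSeries (key y hy))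

/-- The real sequence space. -/
abbrev Hseq := lp (fun _ : ℕ => ℝ) 2

lemma memSeq (x : ℕ → ℝ) (h : Summable fun n => x n ^ 2) : Memℓp x 2 := by
  apply memℓp_gen
  simpa using h

lemma normSeq (x : Hseq) : ‖x‖ ^ 2 = ∑' n, (x n) ^ 2 := by
  have := lp.norm_rpow_eq_tsum (p := 2) (by norm_num) x
  simpa using this

/-- The reproducing kernel. -/
noncomputable def ker (w : Set.Ioo (-1 : ℝ) 1) : Hseq :=
  ⟨fun n => (w : ℝ) ^ n, memSeq _ (by
    have h : |(w : ℝ)| < 1 := abs_lt.2 w.2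
    have : ∀ n : ℕ, ((w : ℝ) ^ n) ^ 2 = ((w : ℝ) ^ 2) ^ n := fun n => by ring
    simp only [this]
    apply summable_geometric_of_lt_one (by positivity)
    exact (sq_lt_one_iff_abs_lt_one _).2 h)⟩

lemma hasSum_ker (x : Hseq) (w : Set.Ioo (-1 : ℝ) 1) :
    HasSum (fun n => x n * (w : ℝ) ^ n) ⟪x, ker w⟫_ℝ := by
  have := lp.hasSum_inner (𝕜 := ℝ) x (ker w)
  simpa [ker, mul_comm] using this

lemma ker_gram (w v : Set.Ioo (-1 : ℝ) 1) :
    ⟪ker w, ker v⟫_ℝ = (1 - (w : ℝ) * v)⁻¹ := by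
  refine (hasSum_ker (ker w) v).unique ?_
  have h : ‖(w : ℝ) * v‖ < 1 := by
    rw [norm_mul]
    exact mul_lt_one_of_nonneg_of_lt_one_left (norm_nonneg _) (abs_lt.2 w.2) (abs_lt.2 v.2).le
  have := hasSum_geometric_of_norm_lt_one h
  simpa [ker, mul_pow] using this

lemma ker_total (x y : Hseq) (h : ∀ w, ⟪x, ker w⟫_ℝ = ⟪y, ker w⟫_ℝ) : x = y := by
  apply Subtype.ext
  refine coeff_unique _ _ (fun w => ∑' n, x n * w ^ n) (fun w hw => ?_) (fun w hw => ?_)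
  · exact (hasSum_ker x ⟨w, hw⟩).summable.hasSum
  · rw [(hasSum_ker x ⟨w, hw⟩).tsum_eq, h]
    exact hasSum_ker y ⟨w, hw⟩

lemma one_sub_pos {τ w : ℝ} (hτ : τ ∈ Set.Ioo (-1 : ℝ) 1) (hw : w ∈ Set.Ioo (-1 : ℝ) 1) :
    0 < 1 - w * τ := by
  obtain ⟨h1, h2⟩ := hτ
  obtain ⟨h3, h4⟩ := hw
  nlinarith [mul_pos (sub_pos.2 h2) (sub_pos.2 h3), mul_pos (sub_pos.2 h1) (sub_pos.2 h4)]

/-- The disc automorphism on the real interval. -/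
noncomputable def mob (τ w : Set.Ioo (-1 : ℝ) 1) : Set.Ioo (-1 : ℝ) 1 :=
  ⟨((w : ℝ) - τ) / (1 - w * τ), by
    have h := one_sub_pos τ.2 w.2
    obtain ⟨w, hw1, hw2⟩ := w
    obtain ⟨τ, ht1, ht2⟩ := τ
    simp only at h ⊢
    constructor
    · rw [lt_div_iff₀ h]
      nlinarith
    · rw [div_lt_iff₀ h]
      nlinarith⟩

lemma contraction (τ : Set.Ioo (-1 : ℝ) 1) (s : ℝ) (hs : s ^ 2 = 1 - (τ : ℝ) ^ 2) (f : Hseq) :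
    ∃ g : Hseq, ‖g‖ ≤ ‖f‖ ∧
      ∀ w, ⟪g, ker w⟫_ℝ = s / (1 - (w : ℝ) * τ) * ⟪f, ker (mob τ w)⟫_ℝ := by
  obtain ⟨g, hg, hg'⟩ := gram_contraction ker
    (fun w => (s / (1 - (w : ℝ) * τ)) • ker (mob τ w))
    (fun x hx => ker_total x 0 (by simpa using hx)) (by
      intro w v
      simp only [inner_smul_left, inner_smul_right, ker_gram, mob]
      have h1 := one_sub_pos τ.2 w.2
      have h2 := one_sub_pos τ.2 v.2
      have h3 := one_sub_pos v.2 w.2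
      have h4 := one_sub_pos τ.2 τ.2
      obtain ⟨w, hw⟩ := w
      obtain ⟨v, hv⟩ := v
      obtain ⟨τ, ht⟩ := τ
      simp only [conj_trivial] at *
      have n1 : 1 - w * τ ≠ 0 := h1.ne'
      have n1' : 1 - τ * w ≠ 0 := by rwa [mul_comm]
      have n2 : 1 - v * τ ≠ 0 := h2.ne'
      have n2' : 1 - τ * v ≠ 0 := by rwa [mul_comm]
      have n3 : 1 - w * v ≠ 0 := h3.ne'
      have n3' : 1 - v * w ≠ 0 := by rwa [mul_comm]
      have e : 1 - (w - τ) / (1 - w * τ) * ((v - τ) / (1 - v * τ))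
          = s ^ 2 * (1 - w * v) / ((1 - w * τ) * (1 - v * τ)) := by
        rw [hs]
        field_simp
        ring
      have hs0 : s ≠ 0 := by
        rintro rfl
        nlinarith
      rw [e]
      field_simp) f
  exact ⟨g, hg, fun w => by rw [hg' w, inner_smul_right]⟩

lemma isometry_exists (τ : Set.Ioo (-1 : ℝ) 1) (s : ℝ) (hs : s ^ 2 = 1 - (τ : ℝ) ^ 2) (f : Hseq) :
    ∃ g : Hseq, ‖g‖ = ‖f‖ ∧
      ∀ w, ⟪g, ker w⟫_ℝ = s / (1 - (w : ℝ) * τ) * ⟪f, ker (mob τ w)⟫_ℝ := by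
  obtain ⟨g, hg, hg'⟩ := contraction τ s hs f
  let σ : Set.Ioo (-1 : ℝ) 1 := ⟨-τ, by linarith [τ.2.2], by linarith [τ.2.1]⟩
  obtain ⟨h, hh, hh'⟩ := contraction σ s (by simpa [σ] using hs) g
  refine ⟨g, le_antisymm hg ?_, hg'⟩
  have : h = f := by
    apply ker_total
    intro w
    have p1 := one_sub_pos σ.2 w.2
    have p4 := one_sub_pos τ.2 τ.2
    have n1 : 1 + (w : ℝ) * τ ≠ 0 := by
      simp only [σ] at p1
      intro h0
      linarith
    have n2 : 1 + (τ : ℝ) * w ≠ 0 := by rwa [mul_comm]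
    have p2 : 1 - ((mob σ w : Set.Ioo (-1 : ℝ) 1) : ℝ) * τ = s ^ 2 / (1 - (w : ℝ) * σ) := by
      rw [hs]
      simp only [mob, σ, mul_neg, sub_neg_eq_add]
      field_simp
      ring
    have hs0 : s ≠ 0 := by
      rintro rfl
      nlinarith
    have p3 : mob τ (mob σ w) = w := by
      apply Subtype.ext
      change (((mob σ w : Set.Ioo (-1 : ℝ) 1) : ℝ) - τ) /
        (1 - ((mob σ w : Set.Ioo (-1 : ℝ) 1) : ℝ) * τ) = w
      rw [p2, hs]
      have : 1 - (τ : ℝ) ^ 2 ≠ 0 := by nlinarith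
      simp only [mob, σ, mul_neg, sub_neg_eq_add]
      field_simp
      ring
    rw [hh', hg', p2, p3]
    field_simp
  rw [← this]
  exact hh

/-- Energy conservation for finite-energy data: if the initial data
`a(0) = (a_1(0), a_2(0), …)` is square-summable, and `a_n(t)` are the Taylor
coefficients of `G(z,t) = ψ_t(z) G₀(φ_t(z))/cosh t` where `G₀` is the generating
function of the initial data, then `∑ |a_n(t)|² = ∑ |a_n(0)|²` for all `t ≥ 0`.
(Here `a₀ n` stands for `a_{n+1}(0)` and `a n t` for `a_{n+1}(t)`.) -/
theorem stmt11 (a₀ : ℕ → ℝ) (hsq : Summable (fun n : ℕ => (a₀ n) ^ 2))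
    (G₀ : ℂ → ℂ)
    (hG₀ : ∀ z ∈ Metric.ball (0 : ℂ) 1, HasSum (fun n : ℕ => (a₀ n : ℂ) * z ^ n) (G₀ z))
    (a : ℕ → ℝ → ℝ)
    (ha : ∀ t : ℝ, 0 ≤ t → ∀ z ∈ Metric.ball (0 : ℂ) 1,
      HasSum (fun n : ℕ => (a n t : ℂ) * z ^ n)
        ((1 / (1 - z * Real.tanh t)) *
          G₀ ((z - Real.tanh t) / (1 - z * Real.tanh t)) / Real.cosh t)) :
    ∀ t : ℝ, 0 ≤ t → ∑' n : ℕ, (a n t) ^ 2 = ∑' n : ℕ, (a₀ n) ^ 2 := by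
  intro t ht
  have hc := Real.cosh_pos t
  have hsq' := Real.cosh_sq t
  let τ : Set.Ioo (-1 : ℝ) 1 := ⟨Real.tanh t, Real.neg_one_lt_tanh t, Real.tanh_lt_one t⟩
  let f : Hseq := ⟨a₀, memSeq _ hsq⟩
  have hs : (1 / Real.cosh t) ^ 2 = 1 - (τ : ℝ) ^ 2 := by
    simp only [τ, Real.tanh_eq_sinh_div_cosh]
    field_simp
    linarith
  obtain ⟨g, hg, hg'⟩ := isometry_exists τ _ hs f
  have hG : ∀ w : Set.Ioo (-1 : ℝ) 1, G₀ ((w : ℝ) : ℂ) = ((⟪f, ker w⟫_ℝ : ℝ) : ℂ) := by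
    intro w
    refine (hG₀ ((w : ℝ) : ℂ) ?_).unique ?_
    · simpa using abs_lt.2 w.2
    · have := Complex.hasSum_ofReal.2 (hasSum_ker f w)
      simpa [f] using this
  have hag : (fun n => a n t) = fun n => g n := by
    refine coeff_unique _ _ (fun w => ∑' n, g n * w ^ n) (fun w hw => ?_) (fun w hw => ?_)
    · rw [(hasSum_ker g ⟨w, hw⟩).tsum_eq, hg']
      have h := ha t ht (w : ℂ) (by simpa using abs_lt.2 hw)
      have e : ((w : ℂ) - (Real.tanh t : ℝ)) / (1 - (w : ℂ) * (Real.tanh t : ℝ))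
          = (((mob τ ⟨w, hw⟩ : Set.Ioo (-1 : ℝ) 1) : ℝ) : ℂ) := by
        simp [mob, τ]
      rw [e, hG] at h
      rw [← Complex.hasSum_ofReal]
      convert h using 1
      · ext n
        push_cast
        rfl
      · simp only [τ]
        push_cast
        ring
    · exact (hasSum_ker g ⟨w, hw⟩).summable.hasSum
  have h1 := normSeq g
  have h2 := normSeq f
  rw [hg, h2] at h1
  have h3 : ∀ n, a n t = g n := fun n => congrFun hag n
  simp only [h3]
  exact h1.symm
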